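/- arXiv:1503.03111 — 6 statements merged into one kernel-verified Lean document; each statement's English description precedes it below -/
import Mathlib

section
/- Let d ≥ 2 and let K ⊆ ℝ^d be a convex body. Then coin(K) ≤ 2·N_{1/2}(K). Moreover, if K is o-symmetric (K = −K), then 2·N_{1/2}(K) ≤ 3^d·(2d)·(ln d + ln ln d + 5), and for an arbitrary convex body K, 2·N_{1/2}(K) ≤ 2^{d+1}·(C(2d,d)^{1/d} − 1/2)^d·d·(ln d + ln ln d + 5), where C(2d,d) denotes the binomial coefficient (2d choose d). -/
open Set Pointwise

section Defs

variable {V : Type*} [NormedAddCommGroup V] [NormedSpace ℝ V]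

/-- A convex body: compact, convex, with nonempty interior. -/
def IsConvexBody (K : Set V) : Prop :=
  IsCompact K ∧ Convex ℝ K ∧ (interior K).Nonempty

/-- `K` can be covered by `m` homothets of ratio `lam`. -/
def CoversWith (K : Set V) (lam : ℝ) (m : ℕ) : Prop :=
  ∃ t : Fin m → V, K ⊆ ⋃ i, (fun x => lam • x + t i) '' K

/-- The `m`-covering number `γ_m(K)`. -/
noncomputable def gammaC (m : ℕ) (K : Set V) : ℝ :=
  sInf {lam : ℝ | 0 < lam ∧ CoversWith K lam m}

/-- The covering index `coin(K)`. -/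
noncomputable def coin (K : Set V) : ℝ :=
  sInf {r : ℝ | ∃ m : ℕ, 0 < m ∧ gammaC m K ≤ 1 / 2 ∧ r = (m : ℝ) / (1 - gammaC m K)}

/-- The weak covering index `wcoin(K)`. -/
noncomputable def wcoin (K : Set V) : ℝ :=
  sInf {r : ℝ | ∃ m : ℕ, 0 < m ∧ gammaC m K < 1 ∧ r = (m : ℝ) / (1 - gammaC m K)}

/-- `N_λ(K)`: the least number of translates of `λ • K` needed to cover `K`. -/
noncomputable def covN (lam : ℝ) (K : Set V) : ℕ :=
  sInf {n : ℕ | CoversWith K lam n}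

/-- A convex body is tightly covered if for every `0 < λ < 1` it contains `N_λ(K)`
points no two of which lie in a common homothet `λ • K + t`. -/
def TightlyCovered (K : Set V) : Prop :=
  ∀ lam : ℝ, 0 < lam → lam < 1 →
    ∃ p : Fin (covN lam K) → V, (∀ i, p i ∈ K) ∧
      ∀ i j, i ≠ j → ∀ t : V,
        ¬(p i ∈ (fun x => lam • x + t) '' K ∧ p j ∈ (fun x => lam • x + t) '' K)

/-- The covering parameter `C(K)` of Swanepoel. -/
noncomputable def covParam (K : Set V) : ℝ :=
  sInf {r : ℝ | ∃ k : ℕ, ∃ lam : Fin k → ℝ, ∃ t : Fin k → V,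
    (∀ i, 0 < lam i ∧ lam i < 1) ∧
    (K ⊆ ⋃ i, (fun x => lam i • x + t i) '' K) ∧
    r = ∑ i, 1 / (1 - lam i)}

/-- The (multiplicative) Banach–Mazur distance. -/
noncomputable def distBM {d : ℕ} (K L : Set (Fin d → ℝ)) : ℝ :=
  sInf {δ : ℝ | 1 ≤ δ ∧ ∃ T : (Fin d → ℝ) ≃ₗ[ℝ] (Fin d → ℝ), ∃ a ∈ K, ∃ b ∈ L,
    (fun x => x - b) '' L ⊆ T '' ((fun x => x - a) '' K) ∧
    T '' ((fun x => x - a) '' K) ⊆ δ • ((fun x => x - b) '' L)}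

end Defs

open MeasureTheory in
lemma avg_exists {d : ℕ} {A B W : Set (Fin d → ℝ)} (hA : MeasurableSet A) (hB : MeasurableSet B)
    (hW : MeasurableSet W) (hA1 : volume A ≠ ⊤) (hW0 : volume W ≠ 0) (hW1 : volume W ≠ ⊤)
    {c : ENNReal} (h : c * volume W ≤ ∫⁻ a in A, volume (W ∩ {t | t - a ∈ B})) :
    ∃ t, c ≤ volume (A ∩ {a | t - a ∈ B}) := by
  have hS : MeasurableSet {p : (Fin d → ℝ) × (Fin d → ℝ) | p.2 - p.1 ∈ B} :=
    hB.preimage (by fun_prop)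
  have key : ∫⁻ t in W, volume (A ∩ {a | t - a ∈ B}) = ∫⁻ a in A, volume (W ∩ {t | t - a ∈ B}) := by
    have e1 : ∀ t : Fin d → ℝ, volume (A ∩ {a | t - a ∈ B}) =
        ∫⁻ a in A, Set.indicator {p : (Fin d → ℝ) × (Fin d → ℝ) | p.2 - p.1 ∈ B} 1 (a, t) := by
      intro t
      have hm : MeasurableSet {a | t - a ∈ B} := hB.preimage (by fun_prop)
      have : (fun a => Set.indicator {p : (Fin d → ℝ) × (Fin d → ℝ) | p.2 - p.1 ∈ B}
          (1 : (Fin d → ℝ) × (Fin d → ℝ) → ENNReal) (a, t)) = Set.indicator {a | t - a ∈ B} 1 := by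
        ext a; simp [Set.indicator]
      rw [this, lintegral_indicator_one hm, Measure.restrict_apply hm, inter_comm]
    have e2 : ∀ a : Fin d → ℝ, volume (W ∩ {t | t - a ∈ B}) =
        ∫⁻ t in W, Set.indicator {p : (Fin d → ℝ) × (Fin d → ℝ) | p.2 - p.1 ∈ B} 1 (a, t) := by
      intro a
      have hm : MeasurableSet {t | t - a ∈ B} := hB.preimage (by fun_prop)
      have : (fun t => Set.indicator {p : (Fin d → ℝ) × (Fin d → ℝ) | p.2 - p.1 ∈ B}
          (1 : (Fin d → ℝ) × (Fin d → ℝ) → ENNReal) (a, t)) = Set.indicator {t | t - a ∈ B} 1 := by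
        ext t; simp [Set.indicator]
      rw [this, lintegral_indicator_one hm, Measure.restrict_apply hm, inter_comm]
    simp_rw [e1, e2]
    rw [lintegral_lintegral_swap]
    refine Measurable.aemeasurable ?_
    have := (measurable_one (α := ENNReal)).indicator hS
    exact this.comp measurable_swap
  obtain ⟨t, -, ht⟩ := exists_setLAverage_le (μ := volume) (s := W)
    (f := fun t => volume (A ∩ {a | t - a ∈ B})) hW0 hW.nullMeasurableSet (by
      refine ne_top_of_le_ne_top (b := volume A * volume W) (ENNReal.mul_ne_top hA1 hW1) ?_
      calc _ ≤ ∫⁻ t in W, volume A := lintegral_mono fun t => measure_mono inter_subset_left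
        _ = _ := by simp)
  refine ⟨t, le_trans ?_ ht⟩
  rw [setLAverage_eq, key, ENNReal.le_div_iff_mul_le (Or.inl hW0) (Or.inl hW1)]
  exact h

open MeasureTheory in
lemma greedy_step {d : ℕ} {U Q W : Set (Fin d → ℝ)} (hU : MeasurableSet U) (hQ : MeasurableSet Q)
    (hW : MeasurableSet W) (hU1 : volume U ≠ ⊤) (hQ1 : volume Q ≠ ⊤)
    (hW0 : volume W ≠ 0) (hW1 : volume W ≠ ⊤)
    (hsub : ∀ z ∈ U, {t | t - z ∈ Q} ⊆ W) :
    ∃ t, volume.real (U \ {z | t - z ∈ Q}) ≤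
      (1 - volume.real Q / volume.real W) * volume.real U := by
  obtain ⟨t, ht⟩ := avg_exists (c := volume U * volume Q / volume W) hU hQ hW hU1 hW0 hW1 (by
    rw [ENNReal.div_mul_cancel hW0 hW1]
    calc volume U * volume Q = ∫⁻ a in U, volume Q := by simp [mul_comm]
      _ ≤ _ := by
        refine setLIntegral_mono' hU fun a ha => ?_
        rw [inter_eq_self_of_subset_right (hsub a ha)]
        have := measure_preimage_add_right (volume : Measure (Fin d → ℝ)) (-a) Q
        simp only [← sub_eq_add_neg] at this
        exact this.ge)
  refine ⟨t, ?_⟩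
  have hm : MeasurableSet {z | t - z ∈ Q} := hQ.preimage (by fun_prop)
  have h1 := measureReal_inter_add_sdiff (μ := volume) (s := U) hm hU1
  have h2 : volume.real U * volume.real Q / volume.real W ≤ volume.real (U ∩ {z | t - z ∈ Q}) := by
    have := ENNReal.toReal_mono (ne_top_of_le_ne_top hU1 (measure_mono inter_subset_left)) ht
    rw [ENNReal.toReal_div, ENNReal.toReal_mul] at this
    exact this
  have : (1 - volume.real Q / volume.real W) * volume.real U =
    volume.real U - volume.real U * volume.real Q / volume.real W := by ring
  linarith

open MeasureTheory in
lemma greedy_iter {d : ℕ} {U Q W : Set (Fin d → ℝ)} (hU : MeasurableSet U) (hQ : MeasurableSet Q)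
    (hW : MeasurableSet W) (hU1 : volume U ≠ ⊤) (hQ1 : volume Q ≠ ⊤)
    (hW0 : volume W ≠ 0) (hW1 : volume W ≠ ⊤)
    (hsub : ∀ z ∈ U, {t | t - z ∈ Q} ⊆ W) (hQW : volume.real Q ≤ volume.real W) (M : ℕ) :
    ∃ T : Finset (Fin d → ℝ), T.card ≤ M ∧ 
      volume.real (U \ ⋃ t ∈ T, {z | t - z ∈ Q}) ≤
      (1 - volume.real Q / volume.real W) ^ M * volume.real U := by
  classical
  induction M with
  | zero => exact ⟨∅, by simp, by simp⟩
  | succ M ih =>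
    obtain ⟨T, hT, hv⟩ := ih
    have hm : MeasurableSet (U \ ⋃ t ∈ T, {z | t - z ∈ Q}) :=
      hU.diff (Finset.measurableSet_biUnion _ fun t _ => hQ.preimage (by fun_prop))
    obtain ⟨t, ht⟩ := greedy_step hm hQ hW (ne_top_of_le_ne_top hU1 (measure_mono sdiff_subset)) hQ1
      hW0 hW1 (fun z hz => hsub z hz.1)
    refine ⟨insert t T, (Finset.card_insert_le _ _).trans (by lia), ?_⟩
    have : U \ ⋃ s ∈ insert t T, {z | s - z ∈ Q} =
        (U \ ⋃ s ∈ T, {z | s - z ∈ Q}) \ {z | t - z ∈ Q} := by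
      ext z; simp; tauto
    rw [this]
    refine ht.trans ?_
    rw [pow_succ', mul_assoc]
    refine mul_le_mul_of_nonneg_left hv ?_
    have : volume.real Q / volume.real W ≤ 1 := div_le_one_of_le₀ hQW (by positivity)
    linarith

open MeasureTheory in
lemma cover_core {d : ℕ} {K P : Set (Fin d → ℝ)} (hK : IsCompact K) (hKne : K.Nonempty)
    (hP : IsCompact P) (hPc : Convex ℝ P) (hPs : ∀ x ∈ P, -x ∈ P) (hP0 : volume P ≠ 0)
    {η : ℝ} (hη : 0 < η) (hη2 : η ≤ 1 / 2) (M : ℕ) :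
    ∃ T : Finset (Fin d → ℝ), K ⊆ ⋃ t ∈ T, {z | z - t ∈ P} ∧
      (T.card : ℝ) ≤ M + volume.real (K + η • P) / volume.real (η • P) *
        (1 - volume.real ((1 - η) • P) / volume.real (K + P)) ^ M := by
  classical
  have hPne : P.Nonempty := nonempty_of_measure_ne_zero hP0
  have h0 : (0 : Fin d → ℝ) ∈ P := by
    obtain ⟨x, hx⟩ := hPne
    have := hPc hx (hPs x hx) (a := 1/2) (b := 1/2) (by norm_num) (by norm_num) (by norm_num)
    simpa using this
  have hscale : ∀ {s r : ℝ}, 0 ≤ s → s ≤ r → s • P ⊆ r • P := by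
    rintro s r hs hr _ ⟨x, hx, rfl⟩
    rcases eq_or_lt_of_le (hs.trans hr) with h | h
    · have : s = 0 := by linarith
      exact ⟨x, hx, by simp [this, ← h]⟩
    · refine ⟨(s / r) • x, hPc.smul_mem_of_zero_mem h0 hx ⟨by positivity, by
        rw [div_le_one h]; exact hr⟩, ?_⟩
      simp only [smul_smul]; congr 1; field_simp
  have hadd : ∀ {s r : ℝ} {x y : Fin d → ℝ}, 0 ≤ s → 0 ≤ r → x ∈ s • P → y ∈ r • P →
      x + y ∈ (s + r) • P := by
    intro s r x y hs hr hx hy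
    rw [hPc.add_smul hs hr]; exact Set.add_mem_add hx hy
  have hneg : ∀ {s : ℝ} {x : Fin d → ℝ}, x ∈ s • P → -x ∈ s • P := by
    rintro s _ ⟨x, hx, rfl⟩
    exact ⟨-x, hPs x hx, by simp⟩
  have cη : IsCompact (η • P) := hP.smul η
  have cQ : IsCompact ((1 - η) • P) := hP.smul _
  have cU : IsCompact (K + η • P) := hK.add cη
  have cW : IsCompact (K + P) := hK.add hP
  have hPK : volume P ≤ volume (K + P) := by
    obtain ⟨k, hk⟩ := hKne
    calc volume P = volume ((fun h => h + (-k)) ⁻¹' P) := (measure_preimage_add_right _ _ _).symm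
      _ ≤ _ := measure_mono fun z hz => Set.mem_add.2 ⟨k, hk, z + -k, hz, by simp⟩
  have hW0 : volume (K + P) ≠ 0 := fun h => hP0 (le_antisymm (h ▸ hPK) bot_le)
  have hQP : (1 - η) • P ⊆ P := by
    have := hscale (s := 1 - η) (r := 1) (by linarith) (by linarith)
    simpa using this
  have hηv : 0 < volume.real (η • P) := by
    refine ENNReal.toReal_pos ?_ cη.measure_ne_top
    rw [Measure.addHaar_smul]
    refine mul_ne_zero ?_ hP0
    simp [hη.ne']
  obtain ⟨T, hT, hv⟩ := greedy_iter cU.measurableSet cQ.measurableSet cW.measurableSet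
    cU.measure_ne_top cQ.measure_ne_top hW0 cW.measure_ne_top (by
      rintro z ⟨k, hk, p, hp, rfl⟩ t ht
      refine ⟨k, hk, t - k, ?_, by simp⟩
      have := hadd hη.le (by linarith) hp ht
      simp only [add_sub_cancel, one_smul] at this
      convert this using 1; abel)
    (ENNReal.toReal_mono cW.measure_ne_top ((measure_mono hQP).trans hPK)) M
  -- separated sets
  let R : Set (Fin d → ℝ) := K \ ⋃ t ∈ T, {z | z - t ∈ P}
  let good : Finset (Fin d → ℝ) → Prop := fun Y => (↑Y ⊆ R) ∧
    ∀ y ∈ Y, ∀ y' ∈ Y, y ≠ y' → y - y' ∉ P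
  have hbound : ∀ Y, good Y → (Y.card : ℝ) ≤ volume.real (K + η • P) / volume.real (η • P) *
        (1 - volume.real ((1 - η) • P) / volume.real (K + P)) ^ M := by
    rintro Y ⟨hYR, hYs⟩
    have hvol : ∀ y : Fin d → ℝ, volume.real {z | z - y ∈ η • P} = volume.real (η • P) := by
      intro y
      have := measure_preimage_add_right (volume : Measure (Fin d → ℝ)) (-y) (η • P)
      simp only [← sub_eq_add_neg] at this
      exact congrArg ENNReal.toReal this
    have hdisj : (↑Y : Set (Fin d → ℝ)).PairwiseDisjoint (fun y => {z | z - y ∈ η • P}) := by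
      intro y hy y' hy' hne
      rw [Function.onFun, Set.disjoint_left]
      intro z hz hz'
      refine hYs y hy y' hy' hne ?_
      have := hscale (by linarith) (by linarith : η + η ≤ 1) (hadd hη.le hη.le hz' (hneg hz))
      rw [one_smul] at this
      convert this using 1; abel
    have hsub : (⋃ y ∈ Y, {z | z - y ∈ η • P}) ⊆
        (K + η • P) \ ⋃ t ∈ T, {z | t - z ∈ (1 - η) • P} := by
      intro z hz
      simp only [mem_iUnion, exists_prop] at hz
      obtain ⟨y, hy, hz⟩ := hz
      have hyR := hYR hy
      refine ⟨⟨y, hyR.1, z - y, hz, by simp⟩, fun hc => hyR.2 ?_⟩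
      simp only [mem_iUnion, exists_prop] at hc ⊢
      obtain ⟨t, ht, hc⟩ := hc
      refine ⟨t, ht, ?_⟩
      have := hneg (hadd hη.le (by linarith) hz hc)
      simp only [add_sub_cancel, one_smul] at this
      show y - t ∈ P
      convert this using 1; abel
    have hm : ∀ y ∈ Y, MeasurableSet {z | z - y ∈ η • P} := fun y _ =>
      cη.measurableSet.preimage (by fun_prop)
    have h1 := measureReal_biUnion_finset (μ := volume) hdisj hm (fun y _ => by
      have := measure_preimage_add_right (volume : Measure (Fin d → ℝ)) (-y) (η • P)
      simp only [← sub_eq_add_neg] at this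
      exact this ▸ cη.measure_ne_top)
    have h2 := measureReal_mono (μ := volume) hsub
      (ne_top_of_le_ne_top cU.measure_ne_top (measure_mono sdiff_subset))
    rw [h1] at h2
    simp only [hvol, Finset.sum_const, nsmul_eq_mul] at h2
    rw [div_mul_eq_mul_div, le_div_iff₀ hηv]
    linarith
  obtain ⟨Y, hY, hmax⟩ : ∃ Y, good Y ∧ ∀ Y', good Y' → Y'.card ≤ Y.card := by
    obtain ⟨B, hB⟩ := exists_nat_ge (volume.real (K + η • P) / volume.real (η • P) *
        (1 - volume.real ((1 - η) • P) / volume.real (K + P)) ^ M)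
    let p : ℕ → Prop := fun n => ∃ Y, good Y ∧ Y.card = n
    have hp0 : p 0 := ⟨∅, ⟨by simp, by simp⟩, rfl⟩
    obtain ⟨Y, hY, hc⟩ := Nat.findGreatest_spec (P := p) (Nat.zero_le B) hp0
    refine ⟨Y, hY, fun Y' hY' => ?_⟩
    rw [hc]
    exact Nat.le_findGreatest (by exact_mod_cast (hbound Y' hY').trans hB) ⟨Y', hY', rfl⟩
  refine ⟨T ∪ Y, ?_, ?_⟩
  · intro k hk
    by_contra hcon
    simp only [mem_iUnion, exists_prop, Finset.mem_union, not_exists, not_and] at hcon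
    have hkY : k ∉ Y := fun h => hcon k (Or.inr h) (by simpa using h0)
    have : good (insert k Y) := by
      refine ⟨?_, ?_⟩
      · rw [Finset.coe_insert, Set.insert_subset_iff]
        refine ⟨⟨hk, ?_⟩, hY.1⟩
        simp only [mem_iUnion, exists_prop, not_exists, not_and]
        exact fun t ht => hcon t (Or.inl ht)
      · intro y hy y' hy' hne
        rw [Finset.mem_insert] at hy hy'
        rcases hy with rfl | hy <;> rcases hy' with rfl | hy'
        · exact absurd rfl hne
        · exact hcon y' (Or.inr hy')
        · intro h
          have := hPs _ h
          rw [neg_sub] at this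
          exact hcon y (Or.inr hy) this
        · exact hY.2 y hy y' hy' hne
    have := hmax _ this
    rw [Finset.card_insert_of_notMem hkY] at this
    lia
  · have h1 : ((T ∪ Y).card : ℝ) ≤ T.card + Y.card := by exact_mod_cast Finset.card_union_le _ _
    have h2 := hbound Y hY
    have h3 : (T.card : ℝ) ≤ M := by exact_mod_cast hT
    linarith

open MeasureTheory in
lemma real_smul_vol {d : ℕ} (S : Set (Fin d → ℝ)) {r : ℝ} (hr : 0 ≤ r) :
    volume.real (r • S) = r ^ d * volume.real S := by
  rw [Measure.real, Measure.addHaar_smul, ENNReal.toReal_mul, ENNReal.toReal_ofReal (abs_nonneg _)]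
  simp [abs_of_nonneg (pow_nonneg hr d), Measure.real]

open MeasureTheory in
lemma real_pre_vol {d : ℕ} (S : Set (Fin d → ℝ)) (x : Fin d → ℝ) :
    volume.real ((fun z => z + x) ⁻¹' S) = volume.real S :=
  congrArg ENNReal.toReal (measure_preimage_add_right _ _ _)

lemma coversWith_of_finset {d : ℕ} {K : Set (Fin d → ℝ)} (T : Finset (Fin d → ℝ)) 
    (h : K ⊆ ⋃ t ∈ T, (fun x => (1 / 2 : ℝ) • x + t) '' K) : CoversWith K (1 / 2) T.card := by
  refine ⟨fun i => T.equivFin.symm i, fun k hk => ?_⟩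
  have := h hk
  simp only [mem_iUnion, exists_prop] at this
  obtain ⟨t, ht, h⟩ := this
  rw [mem_iUnion]
  exact ⟨T.equivFin ⟨t, ht⟩, by simpa using h⟩

open MeasureTheory in
lemma covN_bound {d : ℕ} {K : Set (Fin d → ℝ)} (hK : IsConvexBody K) (x : Fin d → ℝ) {g : ℝ}
    (hg : 0 < g) (hgx : g * volume.real K ≤ volume.real (K ∩ {a | x - a ∈ K}))
    {η : ℝ} (hη : 0 < η) (hη2 : η ≤ 1 / 2) (M : ℕ) :
    ∃ n : ℕ, CoversWith K (1 / 2) n ∧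
    (n : ℝ) ≤ M + (1 + 2 / η) ^ d / g * (1 - g * ((1 - η) / 3) ^ d) ^ M := by
  obtain ⟨hKc, hKconv, hKi⟩ := hK
  have hV : 0 < volume.real K := by
    refine ENNReal.toReal_pos ?_ hKc.measure_ne_top
    exact (Measure.measure_pos_of_nonempty_interior _ hKi).ne'
  set L := K ∩ {a | x - a ∈ K} with hL
  have hLc : IsCompact L := by
    refine hKc.inter_right ?_
    exact hKc.isClosed.preimage (f := fun a => x - a) (by fun_prop)
  set P : Set (Fin d → ℝ) := (1 / 2 : ℝ) • ((fun z => z + (1 / 2 : ℝ) • x) ⁻¹' L) with hPdef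
  have memP : ∀ u, u ∈ P ↔ (2 : ℝ) • u + (1 / 2 : ℝ) • x ∈ L := by
    intro u
    rw [hPdef, Set.mem_smul_set_iff_inv_smul_mem₀ (by norm_num)]
    simp
  have hPc : IsCompact P := by
    refine IsCompact.smul _ ?_
    exact (Homeomorph.addRight ((1 / 2 : ℝ) • x)).isCompact_preimage.2 hLc
  have hLv : 0 < volume.real L := lt_of_lt_of_le (by positivity) hgx
  have hPv : volume.real P = (1 / 2) ^ d * volume.real L := by
    rw [hPdef, real_smul_vol _ (by norm_num), real_pre_vol]
  have hPv0 : 0 < volume.real P := by rw [hPv]; positivity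
  have hP0 : volume P ≠ 0 := fun h => by simp [Measure.real, h] at hPv0
  have hPs : ∀ u ∈ P, -u ∈ P := by
    intro u hu
    rw [memP] at hu ⊢
    refine ⟨?_, ?_⟩
    · have h2 : x - ((2 : ℝ) • u + (1 / 2 : ℝ) • x) ∈ K := hu.2
      convert h2 using 1
      module
    · show x - _ ∈ K
      convert hu.1 using 1
      module
  have hPconv : Convex ℝ P := by
    intro u hu w hw a b ha hb hab
    rw [memP] at hu hw ⊢
    refine ⟨?_, ?_⟩
    · convert hKconv hu.1 hw.1 ha hb hab using 1
      have : b = 1 - a := by linarith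
      subst this; module
    · show x - _ ∈ K
      convert hKconv hu.2 hw.2 ha hb hab using 1
      have : b = 1 - a := by linarith
      subst this; module
  have hsum : ∀ s : ℝ, 0 ≤ s → volume.real (K + s • P) ≤ (1 + s / 2) ^ d * volume.real K := by
    intro s hs
    rw [← real_smul_vol K (by positivity : 0 ≤ 1 + s / 2),
      ← real_pre_vol ((1 + s / 2) • K) ((s / 4) • x)]
    refine measureReal_mono ?_ ?_
    · rintro _ ⟨k, hk, _, ⟨u, hu, rfl⟩, rfl⟩
      rw [memP] at hu
      show k + s • u + (s / 4) • x ∈ (1 + s / 2) • K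
      rw [hKconv.add_smul (by norm_num) (by positivity), one_smul]
      refine ⟨k, hk, (s / 2) • ((2 : ℝ) • u + (1 / 2 : ℝ) • x), Set.smul_mem_smul_set hu.1, ?_⟩
      module
    · rw [measure_preimage_add_right]; exact (hKc.smul _).measure_ne_top
  obtain ⟨T, hT, hc⟩ := cover_core hKc (hKi.mono interior_subset) hPc hPconv hPs hP0 hη hη2 M
  classical
  refine ⟨(T.image (fun t => t - (1 / 4 : ℝ) • x)).card, ?_, ?_⟩
  · refine coversWith_of_finset _ (fun k hk => ?_)
    have := hT hk
    simp only [mem_iUnion, exists_prop, Finset.mem_image] at this ⊢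
    obtain ⟨t, ht, h⟩ := this
    refine ⟨_, ⟨t, ht, rfl⟩, (2 : ℝ) • (k - t) + (1 / 2 : ℝ) • x, ((memP _).1 h).1, ?_⟩
    module
  · refine (Nat.cast_le.2 Finset.card_image_le).trans (hc.trans ?_)
    have h1 : volume.real (K + η • P) / volume.real (η • P) ≤ (1 + 2 / η) ^ d / g := by
      rw [real_smul_vol _ hη.le, hPv, div_le_div_iff₀ (by positivity) hg]
      calc volume.real (K + η • P) * g ≤ (1 + η / 2) ^ d * volume.real K * g := by
            gcongr; exact hsum η hη.le
        _ = (1 + η / 2) ^ d * (g * volume.real K) := by ring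
        _ ≤ (1 + η / 2) ^ d * volume.real L := by gcongr
        _ = _ := by
          rw [← mul_assoc, ← mul_assoc, ← mul_pow, ← mul_pow]; congr 2; field_simp; ring
    have hKP := hsum 1 (by norm_num)
    rw [one_smul] at hKP
    have hle : volume.real P ≤ volume.real (K + P) := by
      obtain ⟨k, hk⟩ := hKi.mono interior_subset
      rw [← real_pre_vol P (-k)]
      refine measureReal_mono (fun z hz => Set.mem_add.2 ⟨k, hk, z + -k, hz, by simp⟩) 
        (hKc.add hPc).measure_ne_top
    have hKP0 : 0 < volume.real (K + P) := hPv0.trans_le hle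
    have h2 : g * ((1 - η) / 3) ^ d ≤ volume.real ((1 - η) • P) / volume.real (K + P) := by
      have e0 : (0 : ℝ) ≤ 1 - η := by linarith
      rw [real_smul_vol _ e0, hPv, le_div_iff₀ hKP0]
      calc g * ((1 - η) / 3) ^ d * volume.real (K + P) ≤
          g * ((1 - η) / 3) ^ d * ((1 + 1 / 2) ^ d * volume.real K) := by gcongr
        _ = ((1 - η) / 3) ^ d * (1 + 1 / 2) ^ d * (g * volume.real K) := by ring
        _ ≤ ((1 - η) / 3) ^ d * (1 + 1 / 2) ^ d * volume.real L := by gcongr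
        _ = _ := by
          rw [← mul_assoc, ← mul_pow, ← mul_pow]; congr 2; ring
    have h3 : volume.real ((1 - η) • P) / volume.real (K + P) ≤ 1 := by
      refine div_le_one_of_le₀ ?_ hKP0.le
      rw [real_smul_vol _ (by linarith)]
      have : (1 - η) ^ d ≤ 1 := pow_le_one₀ (by linarith) (by linarith)
      nlinarith
    have h4 : (1 - volume.real ((1 - η) • P) / volume.real (K + P)) ^ M ≤
        (1 - g * ((1 - η) / 3) ^ d) ^ M := pow_le_pow_left₀ (by linarith) (by linarith) _
    have h5 : 0 ≤ (1 - volume.real ((1 - η) • P) / volume.real (K + P)) ^ M :=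
      pow_nonneg (by linarith) _
    have : 0 < (1 + 2 / η) ^ d / g := by positivity
    gcongr

open MeasureTheory in
lemma exists_center {d : ℕ} {K : Set (Fin d → ℝ)} (hK : IsConvexBody K) {l : ℝ} (hl : 1 / 2 < l)
    (hl1 : l ≤ 1) : ∃ x, ((2 * (2 * l - 1) ^ d + (l ^ d) ^ 2 - 2 * (2 * l - 1) ^ d * l ^ d) / l ^ d
      / 2 ^ d) * volume.real K ≤ volume.real (K ∩ {a | x - a ∈ K}) := by
  have main : ∀ {K : Set (Fin d → ℝ)}, IsConvexBody K → 0 ∈ K →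
      ∃ x, ((2 * (2 * l - 1) ^ d + (l ^ d) ^ 2 - 2 * (2 * l - 1) ^ d * l ^ d) / l ^ d
      / 2 ^ d) * volume.real K ≤ volume.real (K ∩ {a | x - a ∈ K}) := by
    intro K ⟨hKc, hKconv, hKi⟩ h0
    have hV0 : volume K ≠ 0 := (Measure.measure_pos_of_nonempty_interior _ hKi).ne'
    have hV1 : volume K ≠ ⊤ := hKc.measure_ne_top
    have hV : 0 < volume.real K := ENNReal.toReal_pos hV0 hV1
    set u := (2 * l - 1) ^ d with hu
    set v := l ^ d with hv
    have hu0 : 0 ≤ u := pow_nonneg (by linarith) _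
    have hv0 : 0 < v := pow_pos (by linarith) _
    have huv : u ≤ v := pow_le_pow_left₀ (by linarith) (by linarith) _
    have hv1 : v ≤ 1 := pow_le_one₀ (by linarith) (by linarith)
    have hsm : ∀ r : ℝ, 0 ≤ r → volume (r • K) = ENNReal.ofReal (r ^ d) * volume K := by
      intro r hr
      rw [Measure.addHaar_smul]; simp [abs_of_nonneg hr]
    have hscale : ∀ {r : ℝ}, 0 ≤ r → r ≤ 1 → r • K ⊆ K := by
      rintro r hs hr _ ⟨x, hx, rfl⟩
      exact hKconv.smul_mem_of_zero_mem h0 hx ⟨hs, hr⟩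
    have hlow : ∀ {s r : ℝ} {a}, 0 ≤ s → 0 ≤ r → r ≤ 1 → s + r = 2 * l → a ∈ s • K →
        ENNReal.ofReal (r ^ d) * volume K ≤ volume (((2 * l) • K) ∩ {t | t - a ∈ K}) := by
      intro s r a hs hr hr1 hsr ha
      rw [← hsm r hr, ← measure_preimage_add_right volume (-a) (r • K)]
      refine measure_mono fun z hz => ⟨?_, ?_⟩
      · rw [← hsr, hKconv.add_smul hs hr]
        exact Set.mem_add.2 ⟨a, ha, z + -a, hz, by simp⟩
      · have := hscale hr hr1 hz
        have h3 : z + -a ∈ K := this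
        rwa [← sub_eq_add_neg] at h3
    have ml : MeasurableSet (l • K) := (hKc.smul l).measurableSet
    have ma : MeasurableSet ((2 * l - 1) • K) := (hKc.smul _).measurableSet
    obtain ⟨t, ht⟩ := avg_exists (A := K) (B := K) (W := (2 * l) • K)
      (c := ENNReal.ofReal ((2 * u + v ^ 2 - 2 * u * v) / v / 2 ^ d) * volume K)
      hKc.measurableSet hKc.measurableSet (hKc.smul _).measurableSet hV1
      (by rw [hsm _ (by linarith)]; refine mul_ne_zero ?_ hV0; 
          rw [ENNReal.ofReal_ne_zero_iff]; exact pow_pos (by linarith) _) 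
      (hKc.smul _).measure_ne_top (by
        calc _ = ENNReal.ofReal (u + (v - u) * v + (1 - v) * u) * volume K * volume K := by
              rw [hsm _ (by linarith), mul_comm (ENNReal.ofReal ((2 * l) ^ d)), ← mul_assoc,
                mul_comm _ (ENNReal.ofReal ((2 * l) ^ d)), ← mul_assoc, ← mul_assoc,
                ← ENNReal.ofReal_mul (by rw [mul_pow]; positivity)]
              congr 3
              rw [mul_pow, ← hv]; field_simp; ring
          _ = ∫⁻ a in K, (ENNReal.ofReal u * volume K + 
              (l • K).indicator (fun _ => ENNReal.ofReal (v - u) * volume K) a +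
              ((2 * l - 1) • K).indicator (fun _ => ENNReal.ofReal (1 - v) * volume K) a) := by
              rw [lintegral_add_right _ (measurable_const.indicator ma),
                lintegral_add_right _ (measurable_const.indicator ml),
                lintegral_indicator ml, lintegral_indicator ma]
              simp only [lintegral_const, Measure.restrict_restrict ml, 
                Measure.restrict_restrict ma, Measure.restrict_apply_univ, 
                inter_eq_self_of_subset_left (hscale (by linarith : 0 ≤ l) hl1),
                inter_eq_self_of_subset_left (hscale (by linarith : 0 ≤ 2 * l - 1) (by linarith))]
              rw [hsm _ (by linarith), hsm _ (by linarith), ← hu, ← hv,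
                ENNReal.ofReal_add (by nlinarith) (by nlinarith),
                ENNReal.ofReal_add (by nlinarith) (by nlinarith),
                ENNReal.ofReal_mul (by linarith), ENNReal.ofReal_mul (by linarith)]
              ring
          _ ≤ _ := by
              refine setLIntegral_mono' hKc.measurableSet fun a ha => ?_
              by_cases h1 : a ∈ l • K
              · by_cases h2 : a ∈ (2 * l - 1) • K
                · rw [Set.indicator_of_mem h1, Set.indicator_of_mem h2, ← add_mul, ← add_mul,
                    ← ENNReal.ofReal_add (by linarith) (by linarith),
                    ← ENNReal.ofReal_add (by linarith) (by linarith)]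
                  convert hlow (by linarith) zero_le_one le_rfl (by ring) h2 using 3
                  simp
                · rw [Set.indicator_of_mem h1, Set.indicator_of_notMem h2, ← add_mul, add_zero,
                    ← ENNReal.ofReal_add (by linarith) (by linarith)]
                  convert hlow (by linarith) (by linarith : 0 ≤ l) hl1 (by ring) h1 using 3
                  simp [hv]
              · have h2 : a ∉ (2 * l - 1) • K := by
                  intro h
                  refine h1 ?_
                  have hl0 : l ≠ 0 := by linarith
                  have : (2 * l - 1) • K ⊆ l • K := by
                    rintro _ ⟨y, hy, rfl⟩
                    refine ⟨((2 * l - 1) / l) • y, hscale (r := (2 * l - 1) / l) 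
                      (div_nonneg (by linarith) (by linarith)) 
                      (by rw [div_le_one (by linarith)]; linarith) (Set.smul_mem_smul_set hy), ?_⟩
                    simp only [smul_smul]; congr 1; field_simp
                  exact this h
                rw [Set.indicator_of_notMem h1, Set.indicator_of_notMem h2, add_zero, add_zero]
                have ha1 : a ∈ (1 : ℝ) • K := by simpa using ha
                exact hlow zero_le_one (by linarith) (by linarith) (by ring) ha1)
    refine ⟨t, ?_⟩
    have := ENNReal.toReal_mono (ne_top_of_le_ne_top hV1 (measure_mono inter_subset_left)) ht
    rw [ENNReal.toReal_mul, ENNReal.toReal_ofReal] at this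
    · exact this
    · have : 0 ≤ 2 * u + v ^ 2 - 2 * u * v := by nlinarith
      positivity
  obtain ⟨hKc, hKconv, hKi⟩ := hK
  obtain ⟨o, ho⟩ := hKi
  have hK' : IsConvexBody ((fun z => z + o) ⁻¹' K) := by
    refine ⟨(Homeomorph.addRight o).isCompact_preimage.2 hKc, hKconv.translate_preimage_left o, ?_⟩
    have := (Homeomorph.addRight o).preimage_interior K
    refine ⟨0, ?_⟩
    have h2 : (0 : Fin d → ℝ) ∈ (Homeomorph.addRight o) ⁻¹' interior K := by simpa using ho
    rw [this] at h2
    exact h2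
  obtain ⟨x, hx⟩ := main hK' (by simpa using interior_subset ho)
  refine ⟨x + (2 : ℝ) • o, ?_⟩
  rw [real_pre_vol] at hx
  refine hx.trans (le_of_eq ?_)
  rw [← real_pre_vol (K ∩ _) o]
  congr 1
  ext z
  have : x + (2 : ℝ) • o - (z + o) = x - z + o := by module
  simp [this]

lemma covN_le_of {d : ℕ} {K : Set (Fin d → ℝ)} {B : ℝ}
    (h : ∃ n : ℕ, CoversWith K (1 / 2) n ∧ (n : ℝ) ≤ B) : (covN (1 / 2 : ℝ) K : ℝ) ≤ B := by
  obtain ⟨n, hn, hB⟩ := h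
  have : covN (1 / 2 : ℝ) K ≤ n := Nat.sInf_le hn
  exact (Nat.cast_le.2 this).trans hB

open MeasureTheory in
lemma theta_bound {d : ℕ} {K : Set (Fin d → ℝ)} (hK : IsConvexBody K) (x : Fin d → ℝ) {g : ℝ}
    (hg : 0 < g) (hg1 : g ≤ 1) (hgx : g * volume.real K ≤ volume.real (K ∩ {a | x - a ∈ K}))
    {η l : ℝ} (hη : 0 < η) (hη2 : η ≤ 1 / 2) (hl : 0 ≤ l)
    (h : (2 + η) * (1 - η) / (3 * η) ≤ Real.exp l) :
    (covN (1 / 2 : ℝ) K : ℝ) ≤ (3 / (1 - η)) ^ d / g * (d * l + 1) + 1 := by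
  have h1 : 0 < 1 - η := by linarith
  set A := (3 / (1 - η)) ^ d / g with hA
  have hA0 : 0 < A := by positivity
  have hgA : g * ((1 - η) / 3) ^ d = 1 / A := by
    rw [hA, one_div_div, div_eq_mul_inv g, ← inv_pow, inv_div]
  have hp1 : ((1 - η) / 3) ^ d ≤ 1 := pow_le_one₀ (by positivity) (by linarith)
  have hp0 : 0 ≤ ((1 - η) / 3) ^ d := by positivity
  have hA1 : 0 ≤ 1 - 1 / A := by rw [← hgA]; nlinarith
  set M := ⌈A * (d * l)⌉₊ with hM
  have hM1 : (M : ℝ) ≤ A * (d * l) + 1 := (Nat.ceil_lt_add_one (by positivity)).le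
  have hM2 : A * (d * l) ≤ M := Nat.le_ceil _
  have := covN_le_of (covN_bound hK x hg hgx hη hη2 M)
  rw [hgA] at this
  have hpow : (1 - 1 / A) ^ M ≤ Real.exp (-(d * l)) := by
    calc (1 - 1 / A) ^ M ≤ (Real.exp (-(1 / A))) ^ M :=
          pow_le_pow_left₀ hA1 (Real.one_sub_le_exp_neg _) _
      _ = Real.exp (-(M / A)) := by rw [← Real.exp_nat_mul]; congr 1; ring
      _ ≤ _ := by
        apply Real.exp_le_exp.2
        have : d * l ≤ M / A := by rw [le_div_iff₀ hA0]; linarith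
        linarith
  have hZ : (1 + 2 / η) ^ d / g * (1 - 1 / A) ^ M ≤ A := by
    have hle : (1 + 2 / η) ^ d / g ≤ A * Real.exp (d * l) := by
      rw [Real.exp_nat_mul, hA, div_mul_eq_mul_div, ← mul_pow]
      have : 1 + 2 / η ≤ 3 / (1 - η) * Real.exp l := by
        calc 1 + 2 / η = 3 / (1 - η) * ((2 + η) * (1 - η) / (3 * η)) := by field_simp; ring
          _ ≤ _ := by gcongr
      gcongr
    calc _ ≤ A * Real.exp (d * l) * Real.exp (-(d * l)) := by gcongr
      _ = A := by rw [mul_assoc, ← Real.exp_add]; simp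
  linarith

open MeasureTheory in
lemma theta_large {d : ℕ} (hd : 3 ≤ d) {K : Set (Fin d → ℝ)} (hK : IsConvexBody K)
    (x : Fin d → ℝ) {g : ℝ}
    (hg : 0 < g) (hg1 : g ≤ 1) (hgx : g * volume.real K ≤ volume.real (K ∩ {a | x - a ∈ K})) :
    (covN (1 / 2 : ℝ) K : ℝ) ≤
      3 ^ d / g * (d * (Real.log d + Real.log (Real.log d) + 5)) := by
  set L := Real.log d with hL
  have hd3 : (3 : ℝ) ≤ d := by exact_mod_cast hd
  have hL1 : 1 < L := by
    rw [hL, Real.lt_log_iff_exp_lt (by linarith)]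
    exact Real.exp_one_lt_three.trans_le hd3
  set l := L + Real.log L with hl
  have hll : Real.log L ≤ L - 1 := Real.log_le_sub_one_of_pos (by linarith)
  have hll0 : 0 ≤ Real.log L := Real.log_nonneg hL1.le
  have hexp : Real.exp l = d * L := by
    rw [hl, Real.exp_add, hL, Real.exp_log (by linarith), Real.exp_log (by rw [← hL]; linarith)]
  set η : ℝ := 2 / (3 * (d * L)) with hη
  have hdL : 3 < d * L := by nlinarith
  have hη0 : 0 < η := by positivity
  have hη2 : η ≤ 1 / 2 := by
    rw [hη, div_le_div_iff₀ (by positivity) (by norm_num)]; linarith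
  have hb := theta_bound hK x hg hg1 hgx hη0 hη2 (l := l) (by linarith) (by
    rw [hexp, div_le_iff₀ (by positivity)]
    have : d * L * (3 * η) = 2 := by rw [hη]; field_simp
    rw [this]; nlinarith)
  have hB : 1 - 2 / (3 * L) ≤ (1 - η) ^ d := by
    have := one_add_mul_le_pow (a := -η) (by linarith) d
    have e : (d : ℝ) * -η = - (2 / (3 * L)) := by rw [hη]; field_simp
    rw [e] at this
    rw [← sub_eq_add_neg, ← sub_eq_add_neg] at this
    exact this
  have hB0 : 0 < 1 - 2 / (3 * L) := by
    rw [sub_pos, div_lt_one (by positivity)]; linarith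
  set F := 1 + 2 / (3 * L - 2) with hF
  have h32 : 0 < 3 * L - 2 := by linarith
  have hFe : F = 1 / (1 - 2 / (3 * L)) := by
    rw [hF]; field_simp; ring
  have hF3 : F ≤ 3 := by
    have : 2 / (3 * L - 2) ≤ 2 := by rw [div_le_iff₀ h32]; linarith
    linarith
  have hFl : F * l ≤ l + 2 := by
    have : 2 / (3 * L - 2) * l ≤ 2 := by
      rw [div_mul_eq_mul_div, div_le_iff₀ h32]; linarith
    rw [hF]; linarith
  have hA : (3 / (1 - η)) ^ d ≤ 3 ^ d * F := by
    rw [div_pow, hFe, mul_one_div]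
    gcongr
  have h1 : 1 ≤ 3 ^ d / g := by
    rw [le_div_iff₀ hg, one_mul]
    exact hg1.trans (one_le_pow₀ (by norm_num))
  have hl0 : 0 ≤ l := by linarith
  calc (covN (1 / 2 : ℝ) K : ℝ) ≤ (3 / (1 - η)) ^ d / g * (d * l + 1) + 1 := hb
    _ ≤ 3 ^ d * F / g * (d * l + 1) + 3 ^ d / g := by gcongr
    _ = 3 ^ d / g * (d * (F * l) + F + 1) := by ring
    _ ≤ 3 ^ d / g * (d * (l + 2) + 3 + 1) := by gcongr
    _ ≤ _ := by gcongr; linarith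

lemma log_lower (d k j : ℕ) (r : ℝ) (hd : 0 < d) (hr : 0 < r)
    (h : r ≤ k * 0.6931471 + (1 - 2 ^ k / d)) :
    r + (j * 0.6931471 + (1 - 2 ^ j / r)) + 5 ≤ Real.log d + Real.log (Real.log d) + 5 := by
  have key : ∀ (x : ℝ) (k : ℕ), 0 < x → k * 0.6931471 + (1 - 2 ^ k / x) ≤ Real.log x := by
    intro x k hx
    have h1 := Real.one_sub_inv_le_log_of_pos (x := x / 2 ^ k) (by positivity)
    rw [inv_div, Real.log_div hx.ne' (by positivity), Real.log_pow] at h1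
    have h2 : (k : ℝ) * 0.6931471 ≤ k * Real.log 2 := by
      have := Real.log_two_gt_d9
      gcongr; linarith
    linarith
  have hd' : (0 : ℝ) < d := by exact_mod_cast hd
  have h1 : r ≤ Real.log d := h.trans (key d k hd')
  have h2 := Real.log_le_log hr h1
  have h3 := key r j hr
  linarith

lemma small_finish (d : ℕ) (hd : 2 ≤ d) {N q s : ℝ} (hq : 1 / 2 ≤ q)
    (hqd : q ^ d ≤ (Nat.choose (2 * d) d : ℝ)) (hs0 : 0 ≤ s)
    (hs : s ≤ Real.log d + Real.log (Real.log d) + 5)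
    (hN : N ≤ 2 ^ d * (q - 1 / 2) ^ d * d * s) :
    2 * N ≤ 2 ^ (d + 1) * (((Nat.choose (2 * d) d : ℝ) ^ ((1 : ℝ) / d) - 1 / 2) ^ d) * d *
        (Real.log d + Real.log (Real.log d) + 5) := by
  have hc : q ≤ (Nat.choose (2 * d) d : ℝ) ^ ((1 : ℝ) / d) := by
    have := Real.rpow_le_rpow (by positivity) hqd (by positivity : (0 : ℝ) ≤ 1 / d)
    rwa [one_div, Real.pow_rpow_inv_natCast (by linarith) (by lia), ← one_div] at this
  have h2 : (q - 1 / 2) ^ d ≤ ((Nat.choose (2 * d) d : ℝ) ^ ((1 : ℝ) / d) - 1 / 2) ^ d :=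
    pow_le_pow_left₀ (by linarith) (by linarith) _
  have h3 : 0 ≤ (q - 1 / 2) ^ d := pow_nonneg (by linarith) _
  calc 2 * N ≤ 2 * (2 ^ d * (q - 1 / 2) ^ d * d * s) := by linarith
    _ = 2 ^ (d + 1) * (q - 1 / 2) ^ d * d * s := by ring
    _ ≤ _ := by
      have h4 := h3.trans h2
      exact mul_le_mul (by gcongr) hs hs0 (by positivity)

lemma choose_large (d : ℕ) (hd : 15 ≤ d) : (7 / 2 : ℝ) ^ d ≤ (Nat.choose (2 * d) d : ℝ) := by
  induction d, hd using Nat.le_induction with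
  | base => norm_num [Nat.choose]
  | succ n hn ih =>
    have h := Nat.succ_mul_centralBinom_succ n
    simp only [Nat.centralBinom] at h
    have h' : ((n : ℝ) + 1) * (Nat.choose (2 * (n + 1)) (n + 1) : ℝ) =
        2 * (2 * n + 1) * (Nat.choose (2 * n) n : ℝ) := by exact_mod_cast h
    have hn' : (15 : ℝ) ≤ n := by exact_mod_cast hn
    have h0 : (0 : ℝ) ≤ (7 / 2 : ℝ) ^ n := by positivity
    rw [pow_succ]
    by_contra hcon
    push Not at hcon
    nlinarith

open MeasureTheory in
lemma general_bound (d : ℕ) (hd : 2 ≤ d) {K : Set (Fin d → ℝ)} (hK : IsConvexBody K) :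
    2 * (covN (1 / 2 : ℝ) K : ℝ) ≤
      2 ^ (d + 1) * (((Nat.choose (2 * d) d : ℝ) ^ ((1 : ℝ) / d) - 1 / 2) ^ d) * d *
        (Real.log d + Real.log (Real.log d) + 5) := by
  have hC1 := exists_center hK (l := 1) (by norm_num) le_rfl
  have hC2 := exists_center hK (l := 19 / 20) (by norm_num) (by norm_num)
  have hexp : (2 + 1 / 20) * (1 - 1 / 20) / (3 * (1 / 20)) ≤ Real.exp (2.565 : ℝ) := by
    refine le_trans ?_ (Real.sum_le_exp_of_nonneg (by norm_num) 14)
    norm_num [Finset.sum_range_succ, Nat.factorial]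
  obtain ⟨x, hx⟩ := hC1
  obtain ⟨y, hy⟩ := hC2
  have e1 : (2 * (2 * 1 - 1) ^ d + (1 ^ d) ^ 2 - 2 * (2 * 1 - 1) ^ d * 1 ^ d) / 1 ^ d / 2 ^ d =
      (1 / 2 ^ d : ℝ) := by norm_num
  rw [e1] at hx
  have hgp : (1 / 2 ^ d : ℝ) ≤ 1 := by
    rw [div_le_one (by positivity)]; exact one_le_pow₀ (by norm_num)
  rcases le_or_gt 15 d with h15 | h15
  · have h := theta_large (by lia) hK x (by positivity) hgp hx
    have hL : 1 ≤ Real.log d := by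
      rw [Real.le_log_iff_exp_le (by positivity)]
      have : (15 : ℝ) ≤ d := by exact_mod_cast h15
      linarith [Real.exp_one_lt_three]
    have hLL := Real.log_nonneg hL
    refine small_finish d hd (q := 7 / 2) (by norm_num) (choose_large d h15) (by linarith) le_rfl ?_
    refine h.trans (le_of_eq ?_)
    norm_num
    ring
  · have hT : ∀ g : ℝ, 0 < g → (∃ x, g * volume.real K ≤ volume.real (K ∩ {a | x - a ∈ K})) →
        (covN (1 / 2 : ℝ) K : ℝ) ≤ 5 ^ d / g := by
      intro g hg ⟨x, hx⟩
      have := covN_le_of (covN_bound hK x hg hx (η := 1 / 2) (by norm_num) le_rfl 0)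
      norm_num at this
      exact this
    have hM : ∀ g : ℝ, 0 < g → g ≤ 1 →
        (∃ x, g * volume.real K ≤ volume.real (K ∩ {a | x - a ∈ K})) →
        (covN (1 / 2 : ℝ) K : ℝ) ≤ (60 / 19) ^ d / g * (d * 2.565 + 1) + 1 := by
      intro g hg hg1 ⟨x, hx⟩
      have := theta_bound hK x hg hg1 hx (η := 1 / 20) (by norm_num) (by norm_num)
        (by norm_num) hexp
      norm_num at this ⊢
      exact this
    interval_cases d
    · have := hT _ (by positivity) ⟨x, hx⟩
      exact small_finish 2 hd (q := 2.44) (by norm_num) (by norm_num [Nat.choose]) (by norm_num)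
        (log_lower 2 1 0 0.693 (by norm_num) (by norm_num) (by norm_num))
        (this.trans (by norm_num))
    · have := hT _ (by positivity) ⟨x, hx⟩
      exact small_finish 3 hd (q := 2.71) (by norm_num) (by norm_num [Nat.choose]) (by norm_num)
        (log_lower 3 2 0 1.05 (by norm_num) (by norm_num) (by norm_num))
        (this.trans (by norm_num))
    · have := hT _ (by positivity) ⟨x, hx⟩
      exact small_finish 4 hd (q := 2.89) (by norm_num) (by norm_num [Nat.choose]) (by norm_num)
        (log_lower 4 2 0 1.386 (by norm_num) (by norm_num) (by norm_num))
        (this.trans (by norm_num))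
    · have := hT _ (by positivity) ⟨x, hx⟩
      exact small_finish 5 hd (q := 3.02) (by norm_num) (by norm_num [Nat.choose]) (by norm_num)
        (log_lower 5 2 1 1.586 (by norm_num) (by norm_num) (by norm_num))
        (this.trans (by norm_num))
    · have := hT _ (by norm_num) ⟨y, hy⟩
      exact small_finish 6 hd (q := 3.12) (by norm_num) (by norm_num [Nat.choose]) (by norm_num)
        (log_lower 6 3 1 1.746 (by norm_num) (by norm_num) (by norm_num))
        (this.trans (by norm_num))
    · have := hM _ (by norm_num) (by norm_num) ⟨y, hy⟩
      exact small_finish 7 hd (q := 3.199) (by norm_num) (by norm_num [Nat.choose]) (by norm_num)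
        (log_lower 7 3 1 1.936 (by norm_num) (by norm_num) (by norm_num))
        (this.trans (by norm_num))
    · have := hM _ (by norm_num) (by norm_num) ⟨y, hy⟩
      exact small_finish 8 hd (q := 3.26) (by norm_num) (by norm_num [Nat.choose]) (by norm_num)
        (log_lower 8 3 1 2.079 (by norm_num) (by norm_num) (by norm_num))
        (this.trans (by norm_num))
    · have := hM _ (by positivity) hgp ⟨x, hx⟩
      exact small_finish 9 hd (q := 3.31) (by norm_num) (by norm_num [Nat.choose]) (by norm_num)
        (log_lower 9 3 1 2.19 (by norm_num) (by norm_num) (by norm_num))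
        (this.trans (by norm_num))
    · have := hM _ (by positivity) hgp ⟨x, hx⟩
      exact small_finish 10 hd (q := 3.36) (by norm_num) (by norm_num [Nat.choose]) (by norm_num)
        (log_lower 10 3 1 2.27 (by norm_num) (by norm_num) (by norm_num))
        (this.trans (by norm_num))
    · have := hM _ (by positivity) hgp ⟨x, hx⟩
      exact small_finish 11 hd (q := 3.4) (by norm_num) (by norm_num [Nat.choose]) (by norm_num)
        (log_lower 11 3 1 2.35 (by norm_num) (by norm_num) (by norm_num))
        (this.trans (by norm_num))
    · have := hM _ (by positivity) hgp ⟨x, hx⟩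
      exact small_finish 12 hd (q := 3.43) (by norm_num) (by norm_num [Nat.choose]) (by norm_num)
        (log_lower 12 4 1 2.4 (by norm_num) (by norm_num) (by norm_num))
        (this.trans (by norm_num))
    · have := hM _ (by positivity) hgp ⟨x, hx⟩
      exact small_finish 13 hd (q := 3.46) (by norm_num) (by norm_num [Nat.choose]) (by norm_num)
        (log_lower 13 4 1 2.5 (by norm_num) (by norm_num) (by norm_num))
        (this.trans (by norm_num))
    · have := hM _ (by positivity) hgp ⟨x, hx⟩
      exact small_finish 14 hd (q := 3.49) (by norm_num) (by norm_num [Nat.choose]) (by norm_num)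
        (log_lower 14 4 1 2.6 (by norm_num) (by norm_num) (by norm_num))
        (this.trans (by norm_num))

/-- Rogers-type upper bounds on the covering index. -/
theorem coin_upper_bounds (d : ℕ) (hd : 2 ≤ d) (K : Set (Fin d → ℝ))
    (hK : IsConvexBody K) :
    coin K ≤ 2 * (covN (1 / 2 : ℝ) K : ℝ) ∧
    (K = -K →
      2 * (covN (1 / 2 : ℝ) K : ℝ) ≤
        3 ^ d * (2 * d) * (Real.log d + Real.log (Real.log d) + 5)) ∧
    2 * (covN (1 / 2 : ℝ) K : ℝ) ≤
      2 ^ (d + 1) * (((Nat.choose (2 * d) d : ℝ) ^ ((1 : ℝ) / d) - 1 / 2) ^ d) * d *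
        (Real.log d + Real.log (Real.log d) + 5) := by
  obtain ⟨x, hx⟩ := exists_center hK (l := 1) (by norm_num) le_rfl
  have e1 : (2 * (2 * 1 - 1) ^ d + (1 ^ d) ^ 2 - 2 * (2 * 1 - 1) ^ d * 1 ^ d) / 1 ^ d / 2 ^ d =
      (1 / 2 ^ d : ℝ) := by norm_num
  rw [e1] at hx
  refine ⟨?_, ?_, general_bound d hd hK⟩
  · obtain ⟨n, hn, -⟩ := covN_bound hK x (by positivity) hx (η := 1 / 2) (by norm_num) le_rfl 0
    have hN : CoversWith K (1 / 2) (covN (1 / 2 : ℝ) K) := 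
      Nat.sInf_mem (s := {n : ℕ | CoversWith K (1 / 2) n}) ⟨n, hn⟩
    set N := covN (1 / 2 : ℝ) K with hNdef
    have hN0 : 0 < N := by
      rcases Nat.eq_zero_or_pos N with h | h
      · rw [h] at hN
        obtain ⟨t, ht⟩ := hN
        obtain ⟨k, hk⟩ := hK.2.2.mono interior_subset
        simpa using ht hk
      · exact h
    have hγ : gammaC N K ≤ 1 / 2 := csInf_le ⟨0, fun r hr => hr.1.le⟩ ⟨by norm_num, hN⟩
    have hc : coin K ≤ (N : ℝ) / (1 - gammaC N K) := by
      refine csInf_le ⟨0, ?_⟩ ⟨N, hN0, hγ, rfl⟩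
      rintro r ⟨m, -, h, rfl⟩
      exact div_nonneg (by positivity) (by linarith)
    refine hc.trans ?_
    rw [div_le_iff₀ (by linarith)]
    have : (0 : ℝ) < N := by exact_mod_cast hN0
    nlinarith
  · intro hs
    have hx0 : (1 : ℝ) * MeasureTheory.volume.real K ≤
        MeasureTheory.volume.real (K ∩ {a | (0 : Fin d → ℝ) - a ∈ K}) := by
      have : K ∩ {a | (0 : Fin d → ℝ) - a ∈ K} = K := by
        refine inter_eq_left.2 fun a ha => ?_
        rw [hs] at ha
        simpa using ha
      rw [this, one_mul]
    rcases Nat.eq_or_lt_of_le hd with h | h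
    · subst h
      have h5 := covN_le_of (covN_bound hK 0 one_pos hx0 (η := 1 / 2) (by norm_num) le_rfl 0)
      have hl := log_lower 2 1 0 0.693 (by norm_num) (by norm_num) (by norm_num)
      have h6 : (covN (1 / 2 : ℝ) K : ℝ) ≤ 25 := h5.trans (by norm_num)
      norm_num at hl
      push_cast
      linarith
    · have := theta_large h hK 0 one_pos le_rfl hx0
      rw [div_one] at this
      linarith
end

section
/- For every convex body K ⊆ ℝ^d, N_{1/2}(K) ≤ coin(K) ≤ 2·N_{1/2}(K), where N_{1/2}(K) = N(K, (1/2)K) is the smallest number of translates of (1/2)·K whose union contains K. -/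
open Set Pointwise

open Filter Topology in
theorem aux_mem {V : Type*} [NormedAddCommGroup V] [NormedSpace ℝ V] {K : Set V} {lam : ℝ}
    (h : 0 < lam) (x t : V) :
    x ∈ (fun x => lam • x + t) '' K ↔ lam⁻¹ • (x - t) ∈ K := by
  constructor
  · rintro ⟨y, hy, rfl⟩
    simpa [smul_smul, h.ne'] using hy
  · intro hy
    exact ⟨_, hy, by simp [smul_smul, h.ne']⟩

theorem aux_mono {V : Type*} [NormedAddCommGroup V] [NormedSpace ℝ V] {K : Set V} {lam mu : ℝ}
    (hc : Convex ℝ K) (hne : K.Nonempty) (h : 0 < lam) (hl : lam ≤ mu) (m : ℕ)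
    (hcov : CoversWith K lam m) : CoversWith K mu m := by
  obtain ⟨t, ht⟩ := hcov
  obtain ⟨k, hk⟩ := hne
  have hmu : 0 < mu := h.trans_le hl
  refine ⟨fun i => t i - (mu - lam) • k, fun x hx => ?_⟩
  obtain ⟨i, hi⟩ := mem_iUnion.1 (ht hx)
  obtain ⟨y, hy, rfl⟩ := hi
  refine mem_iUnion.2 ⟨i, (lam / mu) • y + ((mu - lam) / mu) • k, ?_, ?_⟩
  · apply hc hy hk (by positivity) (div_nonneg (by linarith) hmu.le)
    field_simp; ring
  · have h1 : mu * (lam / mu) = lam := by field_simp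
    have h2 : mu * ((mu - lam) / mu) = mu - lam := by field_simp
    simp only [smul_add, smul_smul, h1, h2]
    abel

theorem aux_exists {V : Type*} [NormedAddCommGroup V] [NormedSpace ℝ V] {K : Set V}
    (hK : IsConvexBody K) : ∃ n, CoversWith K (1/2 : ℝ) n := by
  obtain ⟨hcomp, hc, k, hk⟩ := hK
  obtain ⟨s, hs⟩ := hcomp.elim_finite_subcover
    (fun t : V => (fun x : V => (1/2 : ℝ)⁻¹ • (x - t)) ⁻¹' interior K)
    (fun t => isOpen_interior.preimage (by fun_prop))
    (fun x _ => mem_iUnion.2 ⟨x - (1/2 : ℝ) • k, by simpa [smul_smul] using hk⟩)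
  refine ⟨s.card, fun i => (s.equivFin.symm i : V), fun x hx => ?_⟩
  obtain ⟨t, hts, ht⟩ := mem_iUnion₂.1 (hs hx)
  refine mem_iUnion.2 ⟨s.equivFin ⟨t, hts⟩, ?_⟩
  rw [aux_mem (by norm_num)]
  simpa using interior_subset ht

theorem aux_bdd {V : Type*} [NormedAddCommGroup V] [NormedSpace ℝ V] {K : Set V} {lam : ℝ}
    (hne : K.Nonempty) (h : lam ∈ Icc (0:ℝ) 2) (m : ℕ)
    (hcov : CoversWith K lam m) : ∃ t : Fin m → V,
      (∀ i, t i ∈ (fun p : V × V × ℝ => p.1 - p.2.2 • p.2.1) '' (K ×ˢ K ×ˢ Icc (0:ℝ) 2)) ∧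
      K ⊆ ⋃ i, (fun x => lam • x + t i) '' K := by
  classical
  obtain ⟨t, ht⟩ := hcov
  obtain ⟨k, hk⟩ := hne
  refine ⟨fun i => if t i ∈ (fun p : V × V × ℝ => p.1 - p.2.2 • p.2.1) '' (K ×ˢ K ×ˢ Icc (0:ℝ) 2)
    then t i else k - lam • k, fun i => ?_, fun x hx => ?_⟩
  · dsimp only
    split_ifs with hi
    · exact hi
    · exact ⟨(k, k, lam), ⟨hk, hk, h⟩, rfl⟩
  · obtain ⟨i, hi⟩ := mem_iUnion.1 (ht hx)
    refine mem_iUnion.2 ⟨i, ?_⟩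
    obtain ⟨y, hy, hxy⟩ := hi
    dsimp only at hxy ⊢
    rw [if_pos]
    · exact ⟨y, hy, hxy⟩
    · exact ⟨(x, y, lam), ⟨hx, hy, h⟩, by simp [← hxy]⟩

open Filter Topology in
theorem aux_attain {V : Type*} [NormedAddCommGroup V] [NormedSpace ℝ V] {K : Set V}
    (hK : IsConvexBody K) (m : ℕ) (hm : 0 < m) (hg : gammaC m K ≤ 1 / 2) :
    CoversWith K (1/2 : ℝ) m := by
  obtain ⟨hcomp, hc, hi⟩ := hK
  have hne : K.Nonempty := hi.mono interior_subset
  have hset : {lam : ℝ | 0 < lam ∧ CoversWith K lam m}.Nonempty :=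
    ⟨1, one_pos, fun _ => 0, fun x hx => mem_iUnion.2 ⟨⟨0, hm⟩, x, hx, by simp⟩⟩
  let mu : ℕ → ℝ := fun n => 1/2 + 1 / ((n:ℝ) + 1)
  have hmu0 : ∀ n, 0 < mu n := fun n => by positivity
  have hcov : ∀ n, CoversWith K (mu n) m := fun n => by
    obtain ⟨lam, ⟨h0, hl⟩, hlt⟩ := exists_lt_of_csInf_lt hset
      (show sInf _ < mu n from hg.trans_lt (by
        have : 0 < 1 / ((n:ℝ) + 1) := by positivity
        simp only [mu]; linarith))
    exact aux_mono hc hne h0 hlt.le m hl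
  have hmu2 : ∀ n, mu n ∈ Icc (0:ℝ) 2 := fun n => ⟨(hmu0 n).le, by
    have : 1 / ((n:ℝ) + 1) ≤ 1 := by
      rw [div_le_one (by positivity)]; linarith [Nat.cast_nonneg (α := ℝ) n]
    simp only [mu]; linarith⟩
  choose t htB htc using fun n => aux_bdd hne (hmu2 n) m (hcov n)
  have hB : IsCompact ((fun p : V × V × ℝ => p.1 - p.2.2 • p.2.1) '' (K ×ˢ K ×ˢ Icc (0:ℝ) 2)) :=
    (hcomp.prod (hcomp.prod isCompact_Icc)).image (by fun_prop)
  obtain ⟨s, -, φ, hφ, hlim⟩ := (isCompact_univ_pi (fun _ : Fin m => hB)).tendsto_subseq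
    (x := t) (fun n i _ => htB n i)
  have hmulim : Tendsto mu atTop (𝓝 (1/2)) := by
    simpa [mu] using (tendsto_one_div_add_atTop_nhds_zero_nat (𝕜 := ℝ)).const_add (1/2 : ℝ)
  have hmulim' := hmulim.comp hφ.tendsto_atTop
  refine ⟨s, fun x hx => ?_⟩
  have hex : ∃ i, ∃ᶠ n in atTop, (mu (φ n))⁻¹ • (x - t (φ n) i) ∈ K := by
    by_contra hcon
    push Not at hcon
    obtain ⟨n, hn⟩ := (eventually_all.2 hcon).exists
    obtain ⟨i, hi⟩ := mem_iUnion.1 (htc (φ n) hx)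
    exact hn i ((aux_mem (hmu0 _) _ _).1 hi)
  obtain ⟨i, hi⟩ := hex
  refine mem_iUnion.2 ⟨i, (aux_mem (by norm_num) _ _).2 ?_⟩
  refine hcomp.isClosed.mem_of_frequently_of_tendsto hi ?_
  exact (hmulim'.inv₀ (by norm_num)).smul (tendsto_const_nhds.sub ((tendsto_pi_nhds.1 hlim) i))

/-- `N_{1/2}(K) ≤ coin(K) ≤ 2 N_{1/2}(K)`. -/
theorem covN_le_coin_le (d : ℕ) (K : Set (Fin d → ℝ)) (hK : IsConvexBody K) :
    (covN (1 / 2 : ℝ) K : ℝ) ≤ coin K ∧ coin K ≤ 2 * (covN (1 / 2 : ℝ) K : ℝ) := by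
  have hne : K.Nonempty := hK.2.2.mono interior_subset
  have hg0 : ∀ m, 0 ≤ gammaC m K := fun m => Real.sInf_nonneg fun x hx => hx.1.le
  have hN : CoversWith K (1/2 : ℝ) (covN (1/2 : ℝ) K) := Nat.sInf_mem (aux_exists hK)
  have hNpos : 0 < covN (1/2 : ℝ) K := by
    obtain ⟨t, ht⟩ := hN
    obtain ⟨x, hx⟩ := hne
    obtain ⟨i, -⟩ := mem_iUnion.1 (ht hx)
    exact i.pos
  have hgN : gammaC (covN (1/2 : ℝ) K) K ≤ 1/2 :=
    csInf_le ⟨0, fun x hx => hx.1.le⟩ ⟨by norm_num, hN⟩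
  have hlow : ∀ r ∈ {r : ℝ | ∃ m : ℕ, 0 < m ∧ gammaC m K ≤ 1 / 2 ∧
      r = (m : ℝ) / (1 - gammaC m K)}, (covN (1 / 2 : ℝ) K : ℝ) ≤ r := by
    rintro r ⟨m, hm, hg, rfl⟩
    have h1 : covN (1/2 : ℝ) K ≤ m := Nat.sInf_le (aux_attain hK m hm hg)
    have h2 : (covN (1/2 : ℝ) K : ℝ) ≤ m := by exact_mod_cast h1
    have := hg0 m
    refine h2.trans ?_
    rw [le_div_iff₀ (by linarith)]
    nlinarith [Nat.cast_nonneg (α := ℝ) m]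
  refine ⟨le_csInf ⟨_, _, hNpos, hgN, rfl⟩ hlow, ?_⟩
  refine (csInf_le ⟨_, hlow⟩ ⟨_, hNpos, hgN, rfl⟩).trans ?_
  rw [div_le_iff₀ (by linarith)]
  nlinarith [Nat.cast_nonneg (α := ℝ) (covN (1/2 : ℝ) K)]
end

section
/- Let K, L ⊆ ℝ^d be convex bodies, let a ∈ K, b ∈ L, let δ ≥ 1, and let T : ℝ^d → ℝ^d be an invertible linear map such that L − b ⊆ T(K − a) ⊆ δ·(L − b). Then for every positive integer m, |γ_m(K) − γ_m(L)| ≤ δ − 1. -/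
open Set Pointwise

theorem gammaC_aux {d : ℕ} (K L : Set (Fin d → ℝ)) (a b : Fin d → ℝ)
    (δ : ℝ) (hδ : 1 ≤ δ) (F : (Fin d → ℝ) →ₗ[ℝ] (Fin d → ℝ))
    (h1 : ∀ y ∈ L, F (y - b) + a ∈ K)
    (h2 : ∀ x ∈ K, ∃ y ∈ L, x = δ • F (y - b) + a)
    (m : ℕ) (hm : 0 < m) : gammaC m K - gammaC m L ≤ δ - 1 := by
  have hbdd : ∀ M : Set (Fin d → ℝ), BddBelow {lam : ℝ | 0 < lam ∧ CoversWith M lam m} :=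
    fun M => ⟨0, fun x hx => hx.1.le⟩
  have hone : (1 : ℝ) ∈ {lam : ℝ | 0 < lam ∧ CoversWith L lam m} := by
    refine ⟨one_pos, fun _ => 0, fun x hx => ?_⟩
    exact mem_iUnion.2 ⟨⟨0, hm⟩, x, hx, by simp⟩
  have hle1 : gammaC m L ≤ 1 := csInf_le (hbdd L) hone
  have hpos : 0 < δ := by linarith
  have key : gammaC m K / δ ≤ gammaC m L := by
    refine le_csInf ⟨1, hone⟩ ?_
    rintro lam ⟨hl, t, ht⟩
    rw [div_le_iff₀ hpos]
    refine csInf_le (hbdd K) ⟨mul_pos hl hpos,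
      fun i => δ • F (t i + lam • b - b) + a - (lam * δ) • a, fun x hx => ?_⟩
    obtain ⟨y, hy, rfl⟩ := h2 x hx
    obtain ⟨i, z, hz, rfl⟩ := mem_iUnion.1 (ht hy)
    refine mem_iUnion.2 ⟨i, F (z - b) + a, h1 z hz, ?_⟩
    simp only [map_add, map_sub, map_smul]
    module
  rw [div_le_iff₀ hpos] at key
  nlinarith

/-- `|γ_m(K) − γ_m(L)| ≤ δ − 1` under a Banach–Mazur sandwich. -/
theorem abs_gammaC_sub_le_of_sandwich (d : ℕ) (K L : Set (Fin d → ℝ))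
    (hK : IsConvexBody K) (hL : IsConvexBody L)
    (a : Fin d → ℝ) (ha : a ∈ K) (b : Fin d → ℝ) (hb : b ∈ L)
    (δ : ℝ) (hδ : 1 ≤ δ) (T : (Fin d → ℝ) ≃ₗ[ℝ] (Fin d → ℝ))
    (h1 : (fun x => x - b) '' L ⊆ T '' ((fun x => x - a) '' K))
    (h2 : T '' ((fun x => x - a) '' K) ⊆ δ • ((fun x => x - b) '' L))
    (m : ℕ) (hm : 0 < m) :
    |gammaC m K - gammaC m L| ≤ δ - 1 := by
  rw [abs_le]
  have hpos : 0 < δ := by linarith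
  constructor
  · have := gammaC_aux L K b a δ hδ (δ⁻¹ • T.toLinearMap) ?_ ?_ m hm
    · linarith
    · intro y hy
      obtain ⟨_, ⟨z, hz, rfl⟩, h⟩ := h2 ⟨_, ⟨y, hy, rfl⟩, rfl⟩
      have h' : T (y - a) = δ • (z - b) := h.symm
      simpa [h', inv_smul_smul₀ hpos.ne', -map_sub] using hz
    · intro x hx
      obtain ⟨_, ⟨z, hz, rfl⟩, h⟩ := h1 ⟨x, hx, rfl⟩
      have h' : T (z - a) = x - b := h
      exact ⟨z, hz, by simp [h', smul_inv_smul₀ hpos.ne', -map_sub]⟩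
  · refine gammaC_aux K L a b δ hδ T.symm.toLinearMap ?_ ?_ m hm
    · intro y hy
      obtain ⟨_, ⟨z, hz, rfl⟩, h⟩ := h1 ⟨y, hy, rfl⟩
      have h' : T (z - a) = y - b := h
      have : T.symm.toLinearMap (y - b) + a = z := by
        rw [← h']; simp [-map_sub]
      rwa [this]
    · intro x hx
      obtain ⟨_, ⟨z, hz, rfl⟩, h⟩ := h2 ⟨_, ⟨x, hx, rfl⟩, rfl⟩
      have h' : δ • (z - b) = T (x - a) := h
      refine ⟨z, hz, ?_⟩
      rw [← map_smul, h']; simp [-map_sub]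
end

section
/- Let K, L ⊆ ℝ^d be convex bodies and m a positive integer with γ_m(K) ≤ 1/2 and γ_m(L) ≤ 1/2. Let a ∈ K, b ∈ L, δ ≥ 1, and let T : ℝ^d → ℝ^d be an invertible linear map such that L − b ⊆ T(K − a) ⊆ δ·(L − b). Then m/(1 − γ_m(K)) ≤ δ·(m/(1 − γ_m(L))). -/
open Set Pointwise

/-- `f_m(K) ≤ δ f_m(L)` under a Banach–Mazur sandwich. -/
theorem fm_le_of_sandwich (d : ℕ) (K L : Set (Fin d → ℝ))
    (hK : IsConvexBody K) (hL : IsConvexBody L)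
    (m : ℕ) (hm : 0 < m)
    (hgK : gammaC m K ≤ 1 / 2) (hgL : gammaC m L ≤ 1 / 2)
    (a : Fin d → ℝ) (ha : a ∈ K) (b : Fin d → ℝ) (hb : b ∈ L)
    (δ : ℝ) (hδ : 1 ≤ δ) (T : (Fin d → ℝ) ≃ₗ[ℝ] (Fin d → ℝ))
    (h1 : (fun x => x - b) '' L ⊆ T '' ((fun x => x - a) '' K))
    (h2 : T '' ((fun x => x - a) '' K) ⊆ δ • ((fun x => x - b) '' L)) :
    (m : ℝ) / (1 - gammaC m K) ≤ δ * ((m : ℝ) / (1 - gammaC m L)) := by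
  have bddK : BddBelow {lam : ℝ | 0 < lam ∧ CoversWith K lam m} := ⟨0, fun x hx => hx.1.le⟩
  have y0 : 0 ≤ gammaC m L := Real.sInf_nonneg (fun x hx => hx.1.le)
  have hδ0 : 0 < δ := by linarith
  have neL : {lam : ℝ | 0 < lam ∧ CoversWith L lam m}.Nonempty := by
    refine ⟨1, one_pos, fun _ => 0, fun x hx => ?_⟩
    exact mem_iUnion.2 ⟨⟨0, hm⟩, x, hx, by simp⟩
  have key : ∀ lam : ℝ, 0 < lam → CoversWith L lam m → CoversWith K (δ * lam) m := by
    rintro lam hl ⟨t, ht⟩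
    refine ⟨fun i => a - (δ * lam) • a + T.symm (δ • (lam • b + t i - b)), fun x hx => ?_⟩
    obtain ⟨_, ⟨l, hlL, rfl⟩, hxl⟩ := h2 ⟨_, ⟨x, hx, rfl⟩, rfl⟩
    obtain ⟨i, l', hl', rfl⟩ := mem_iUnion.1 (ht hlL)
    obtain ⟨_, ⟨k, hk, rfl⟩, hkl⟩ := h1 ⟨l', hl', rfl⟩
    refine mem_iUnion.2 ⟨i, k, hk, ?_⟩
    apply T.injective
    simp only [map_add, map_sub, map_smul, LinearEquiv.apply_symm_apply] at hxl hkl ⊢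
    have e1 : T x = T a + δ • (lam • l' + t i - b) := by rw [hxl]; abel
    have e2 : l' = T k - T a + b := by rw [hkl]; abel
    rw [e1, e2]
    module
  have hle : gammaC m K ≤ δ * gammaC m L := by
    rw [← div_le_iff₀' hδ0]
    refine le_csInf neL fun lam h => ?_
    rw [div_le_iff₀' hδ0]
    exact csInf_le bddK ⟨mul_pos hδ0 h.1, key lam h.1 h.2⟩
  generalize gammaC m K = x at *
  generalize gammaC m L = y at *
  have hmain : 1 - y ≤ δ * (1 - x) := by
    by_cases h : 2 * (1 - y) ≤ δ
    · nlinarith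
    · push Not at h
      have h3 : y * (δ + 1) ≤ 1 := by nlinarith
      nlinarith [mul_nonneg (sub_nonneg.2 hδ) (sub_nonneg.2 h3)]
  rw [← mul_div_assoc, div_le_div_iff₀ (by linarith) (by linarith)]
  have hm0 : (0:ℝ) ≤ m := Nat.cast_nonneg m
  nlinarith [mul_le_mul_of_nonneg_left hmain hm0]
end

section
/- Let K, L ⊆ ℝ^d be convex bodies and m a positive integer with γ_m(K) ≤ 1/2 and γ_m(L) ≤ 1/2. Let a ∈ K, b ∈ L, δ ≥ 1, and let T : ℝ^d → ℝ^d be an invertible linear map such that L − b ⊆ T(K − a) ⊆ δ·(L − b). Then m/(1 − γ_m(K)) ≥ (δ/(2δ − 1))·(m/(1 − γ_m(L))). -/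
open Set Pointwise

/-- `f_m(K) ≥ (δ/(2δ−1)) f_m(L)` under a Banach–Mazur sandwich. -/
theorem fm_ge_of_sandwich (d : ℕ) (K L : Set (Fin d → ℝ))
    (hK : IsConvexBody K) (hL : IsConvexBody L)
    (m : ℕ) (hm : 0 < m)
    (hgK : gammaC m K ≤ 1 / 2) (hgL : gammaC m L ≤ 1 / 2)
    (a : Fin d → ℝ) (ha : a ∈ K) (b : Fin d → ℝ) (hb : b ∈ L)
    (δ : ℝ) (hδ : 1 ≤ δ) (T : (Fin d → ℝ) ≃ₗ[ℝ] (Fin d → ℝ))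
    (h1 : (fun x => x - b) '' L ⊆ T '' ((fun x => x - a) '' K))
    (h2 : T '' ((fun x => x - a) '' K) ⊆ δ • ((fun x => x - b) '' L)) :
    δ / (2 * δ - 1) * ((m : ℝ) / (1 - gammaC m L)) ≤ (m : ℝ) / (1 - gammaC m K) := by
  have hmem : ∀ lam : ℝ, 0 < lam → CoversWith K lam m → CoversWith L (lam * δ) m := by
    rintro lam hl ⟨t, ht⟩
    refine ⟨fun i => b - (lam * δ) • b + T (lam • a + t i - a), ?_⟩
    intro y hy
    obtain ⟨_, ⟨k, hk, rfl⟩, hky⟩ := h1 ⟨y, hy, rfl⟩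
    obtain ⟨i, k', hk', hkk⟩ := mem_iUnion.1 (ht hk)
    obtain ⟨_, ⟨l, hl', rfl⟩, hlk⟩ := h2 ⟨_, ⟨k', hk', rfl⟩, rfl⟩
    refine mem_iUnion.2 ⟨i, l, hl', ?_⟩
    simp only at hky hkk hlk ⊢
    have e1 : y = b + T (k - a) := by rw [hky]; abel
    have e2 : k - a = lam • (k' - a) + (lam • a + t i - a) := by
      rw [← hkk, smul_sub]; abel
    rw [e1, e2, map_add, map_smul, ← hlk, smul_smul, smul_sub]
    abel
  have hδ0 : 0 < δ := by linarith
  have hne : {lam : ℝ | 0 < lam ∧ CoversWith K lam m}.Nonempty := by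
    refine ⟨1, one_pos, fun _ => 0, fun x hx => mem_iUnion.2 ⟨⟨0, hm⟩, x, hx, by simp⟩⟩
  have hx0 : 0 ≤ gammaC m K := Real.sInf_nonneg fun x hx => hx.1.le
  have key : gammaC m L ≤ gammaC m K * δ := by
    rw [← div_le_iff₀ hδ0]
    refine le_csInf hne ?_
    rintro lam ⟨hl, hc⟩
    rw [div_le_iff₀ hδ0]
    exact csInf_le ⟨0, fun x hx => hx.1.le⟩ ⟨mul_pos hl hδ0, hmem lam hl hc⟩
  generalize gammaC m K = x at *
  generalize gammaC m L = z at *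
  have hm' : (0 : ℝ) < m := by exact_mod_cast hm
  have main : δ * (1 - x) ≤ (2 * δ - 1) * (1 - z) := by
    rcases le_total (1 / 2) (x * δ) with h | h
    · nlinarith
    · nlinarith [mul_nonneg (sub_nonneg.2 hδ) (sub_nonneg.2 h)]
  rw [div_mul_div_comm, div_le_div_iff₀ (mul_pos (by linarith) (by linarith)) (by linarith)]
  nlinarith [mul_le_mul_of_nonneg_left main hm'.le]
end

section
/- For every convex body K ⊆ ℝ^d, the infimum defining the covering index is attained: there exists a positive integer m with 2^d ≤ m, γ_m(K) ≤ 1/2 and coin(K) = m/(1 − γ_m(K)). -/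
open Set Pointwise

open MeasureTheory in
lemma aux_vol {d : ℕ} {K : Set (Fin d → ℝ)} (hK : IsConvexBody K) {lam : ℝ} (hl : 0 < lam) {m : ℕ}
    (h : CoversWith K lam m) : 1 ≤ (m : ℝ) * lam ^ d := by
  obtain ⟨t, ht⟩ := h
  have hpos : 0 < volume K :=
    lt_of_lt_of_le (isOpen_interior.measure_pos volume hK.2.2) (measure_mono interior_subset)
  have hfin : volume K ≠ ⊤ := hK.1.measure_lt_top.ne
  have hi : ∀ i, volume ((fun x => lam • x + t i) '' K) = ENNReal.ofReal (lam ^ d) * volume K := by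
    intro i
    have e : (fun x => lam • x + t i) '' K = (fun x => x + t i) '' (lam • K) := by
      rw [← Set.image_smul, Set.image_image]
    rw [e, Set.image_add_right, measure_preimage_add_right, Measure.addHaar_smul]
    simp [abs_of_pos hl]
  have h1 : volume K ≤ ENNReal.ofReal (m * lam ^ d) * volume K := by
    calc volume K ≤ volume (⋃ i, (fun x => lam • x + t i) '' K) := measure_mono ht
      _ ≤ ∑ i, volume ((fun x => lam • x + t i) '' K) := measure_iUnion_fintype_le _ _
      _ = ENNReal.ofReal (m * lam ^ d) * volume K := by
        simp only [hi]
        rw [ENNReal.ofReal_mul (by positivity)]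
        simp [mul_assoc]
  by_contra hc
  push Not at hc
  have h2 : ENNReal.ofReal (m * lam ^ d) * volume K < 1 * volume K :=
    (ENNReal.mul_lt_mul_iff_left hpos.ne' hfin).2 (ENNReal.ofReal_lt_one.2 hc)
  rw [one_mul] at h2
  exact absurd h1 (not_le.2 h2)

lemma aux_exists_s19 {d : ℕ} {K : Set (Fin d → ℝ)} (hK : IsConvexBody K) :
    ∃ m : ℕ, 0 < m ∧ CoversWith K (1 / 2) m := by
  obtain ⟨x0, hx0⟩ := hK.2.2
  let U : (Fin d → ℝ) → Set (Fin d → ℝ) := fun x => (fun y => (2 : ℝ) • (y - x) + x0) ⁻¹' interior K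
  have hU : ∀ x, IsOpen (U x) := fun x => isOpen_interior.preimage (by fun_prop)
  obtain ⟨s, hs⟩ := hK.1.elim_finite_subcover U hU
    (fun x _ => Set.mem_iUnion.2 ⟨x, by simpa [U] using hx0⟩)
  have hcov : CoversWith K (1 / 2) s.card := by
    refine ⟨fun i => ((s.equivFin.symm i : Fin d → ℝ)) - (1 / 2 : ℝ) • x0, fun y hy => ?_⟩
    obtain ⟨x, hx, hyx⟩ := Set.mem_iUnion₂.1 (hs hy)
    refine Set.mem_iUnion.2 ⟨s.equivFin ⟨x, hx⟩, (2 : ℝ) • (y - x) + x0, interior_subset hyx, ?_⟩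
    ext j
    simp
  refine ⟨s.card, ?_, hcov⟩
  obtain ⟨t, ht⟩ := hcov
  obtain ⟨i, -⟩ := Set.mem_iUnion.1 (ht (interior_subset hx0))
  exact i.pos

lemma aux_nonneg {d : ℕ} (K : Set (Fin d → ℝ)) (m : ℕ) : 0 ≤ gammaC m K :=
  Real.sInf_nonneg fun _ h => h.1.le

lemma aux_gamma {d : ℕ} {K : Set (Fin d → ℝ)} (hK : IsConvexBody K) {m : ℕ} (hm : 0 < m)
    (hg : gammaC m K ≤ 1 / 2) : 2 ^ d ≤ m := by
  have hne : {lam : ℝ | 0 < lam ∧ CoversWith K lam m}.Nonempty :=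
    ⟨1, one_pos, fun _ => 0, fun y hy => Set.mem_iUnion.2 ⟨⟨0, hm⟩, y, hy, by simp⟩⟩
  have hb : BddBelow {lam : ℝ | 0 < lam ∧ CoversWith K lam m} := ⟨0, fun _ h => h.1.le⟩
  have hc : IsClosed {lam : ℝ | 1 ≤ (m : ℝ) * lam ^ d} :=
    isClosed_le continuous_const (by fun_prop)
  have h : 1 ≤ (m : ℝ) * gammaC m K ^ d :=
    closure_minimal (fun lam h => aux_vol hK h.1 h.2) hc (csInf_mem_closure hne hb)
  have h2 : gammaC m K ^ d ≤ (1 / 2 : ℝ) ^ d := pow_le_pow_left₀ (aux_nonneg K m) hg d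
  have h3 : 1 ≤ (m : ℝ) * (1 / 2) ^ d := h.trans (by gcongr)
  rw [one_div, inv_pow, ← div_eq_mul_inv, le_div_iff₀ (by positivity), one_mul] at h3
  exact_mod_cast h3

/-- the infimum defining the covering index is attained by some
`m ≥ 2^d`. -/
theorem coin_attained (d : ℕ) (K : Set (Fin d → ℝ)) (hK : IsConvexBody K) :
    ∃ m : ℕ, 2 ^ d ≤ m ∧ gammaC m K ≤ 1 / 2 ∧
      coin K = (m : ℝ) / (1 - gammaC m K) := by
  obtain ⟨m0, hm0, hc0⟩ := aux_exists_s19 hK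
  have hg0 : gammaC m0 K ≤ 1 / 2 :=
    csInf_le ⟨0, fun _ h => h.1.le⟩ ⟨by norm_num, hc0⟩
  let f : ℕ → ℝ := fun m => (m : ℝ) / (1 - gammaC m K)
  have hf : ∀ m, gammaC m K ≤ 1 / 2 → (m : ℝ) ≤ f m := fun m h => by
    have := aux_nonneg K m
    rw [le_div_iff₀ (by linarith)]
    nlinarith [(Nat.cast_nonneg m : (0 : ℝ) ≤ m)]
  let S : Set ℕ := {m | 0 < m ∧ gammaC m K ≤ 1 / 2 ∧ (m : ℝ) ≤ f m0}
  have hS : S.Finite := (Set.finite_Iic ⌊f m0⌋₊).subset fun m hm => Nat.le_floor hm.2.2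
  obtain ⟨m, hm, hmin⟩ := Set.exists_min_image S f hS ⟨m0, hm0, hg0, hf m0 hg0⟩
  refine ⟨m, aux_gamma hK hm.1 hm.2.1, hm.2.1, ?_⟩
  refine IsLeast.csInf_eq ⟨⟨m, hm.1, hm.2.1, rfl⟩, ?_⟩
  rintro r ⟨n, hn, hgn, rfl⟩
  by_cases h : (n : ℝ) ≤ f m0
  · exact hmin n ⟨hn, hgn, h⟩
  · exact (hmin m0 ⟨hm0, hg0, hf m0 hg0⟩).trans ((not_le.1 h).le.trans (hf n hgn))
end
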